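/- Let n ≥ 3 be an integer. Then the solution set {(c,λ) ∈ ℂ × ℂ : r(c,λ) = 0 and q_n(c,λ) = 0} equals the set consisting of the four points: (−24, −1/245); ((4n−1)/(2n+1), (1+2n)(−1 − 33n − 60n^2 + 64n^3) / (14(n−1)(17+64n)(1+3n+4n^2))); (2−3n, −(−16 + 78n − 75n^2 + 15n^3) / (7(3n−1)(15n−32)(2−n+n^2))); and (−2n/(2n−3), (2n−3)(−48 + 93n − 45n^2 + 4n^3) / (7(4n−3)(17n−33)(8−11n+4n^2))). -/

import Mathlib

/-- The type-D truncation polynomial `q_n(c,λ)`. -/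
noncomputable def qD (n c lam : ℂ) : ℂ :=
  7 * lam * (c - 1) * (22 + 5 * c)
      * (-3 * c + 10 * n - 2 * c * n - 19 * n ^ 2 + 2 * c * n ^ 2 + 12 * n ^ 3)
    - (-6 * c - 9 * c ^ 2 - 28 * n + 120 * c * n - 2 * c ^ 2 * n + 10 * n ^ 2
        - 147 * c * n ^ 2 + 2 * c ^ 2 * n ^ 2 + 24 * n ^ 3 + 36 * c * n ^ 3)

/-- The parafermion-orbifold truncation polynomial `r(c,λ)`. -/
noncomputable def rP (c lam : ℂ) : ℂ :=
  7 * lam * (c - 1) * (22 + 5 * c) * (16 - c + c ^ 2)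
    + 64 + 6 * c - 45 * c ^ 2 - 5 * c ^ 3

/-!
Both polynomials are affine in `λ`. The coefficient of `λ` in `r` vanishes at no point of the curve
`r = 0`, which is therefore a graph over the `c`-line. Eliminating `λ` leaves a polynomial in `c`
that splits into four factors linear in `c`, one for each intersection point. In terms of the
parafermion central charge `c = 2(k - 1)/(k + 2)`, these are the levels `k = -23/13`, `4n`,
`(2 - 2n)/n` and `-1/(n - 1)`.
-/

/-- The eliminant of `λ` from `r` and `q_n`, as a polynomial in `c`, up to the constant factor
made explicit in `mul_qD_eq`. -/
noncomputable def eliminant (n c : ℂ) : ℂ :=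
  (c + 24) * ((2 * n + 1) * c - (4 * n - 1)) * (c - (2 - 3 * n)) * ((2 * n - 3) * c + 2 * n)

theorem mul_qD_eq (n c lam : ℂ) :
    (16 - c + c ^ 2) * qD n c lam =
      (-3 * c + 10 * n - 2 * c * n - 19 * n ^ 2 + 2 * c * n ^ 2 + 12 * n ^ 3) * rP c lam
        + 2 * eliminant n c := by
  unfold qD rP eliminant
  ring

theorem eliminant_eq_zero_iff {n c : ℂ} (hn₁ : 2 * n + 1 ≠ 0) (hn₃ : 2 * n - 3 ≠ 0) :
    eliminant n c = 0 ↔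
      c = -24 ∨ c = (4 * n - 1) / (2 * n + 1) ∨ c = 2 - 3 * n ∨ c = -(2 * n) / (2 * n - 3) := by
  simp only [eliminant, mul_eq_zero, or_assoc, eq_div_iff hn₁, eq_div_iff hn₃, sub_eq_zero,
    ← eq_neg_iff_add_eq_zero, mul_comm c]

section ParafermionCurve

variable {c lam mu : ℂ}

theorem sub_one_ne_zero_of_rP_eq_zero (h : rP c lam = 0) : c - 1 ≠ 0 := by
  intro hc
  obtain rfl : c = 1 := sub_eq_zero.mp hc
  norm_num [rP] at h

theorem twentyTwo_add_ne_zero_of_rP_eq_zero (h : rP c lam = 0) : 22 + 5 * c ≠ 0 := by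
  intro hc
  obtain rfl : c = -22 / 5 := by linear_combination hc / 5
  norm_num [rP] at h

theorem quadratic_ne_zero_of_rP_eq_zero (h : rP c lam = 0) : 16 - c + c ^ 2 ≠ 0 := by
  intro hc
  -- The `λ`-free part of `r` is congruent to `36 (c + 24)` modulo `16 - c + c²`.
  obtain rfl : c = -24 := by
    unfold rP at h
    linear_combination
      (h - (7 * lam * (c - 1) * (22 + 5 * c) - 5 * c - 50) * hc) / 36
  norm_num at hc

theorem eq_of_rP_eq_zero (hlam : rP c lam = 0) (hmu : rP c mu = 0) : lam = mu := by
  have hcoeff : (c - 1) * (22 + 5 * c) * (16 - c + c ^ 2) ≠ 0 :=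
    mul_ne_zero (mul_ne_zero (sub_one_ne_zero_of_rP_eq_zero hlam)
      (twentyTwo_add_ne_zero_of_rP_eq_zero hlam)) (quadratic_ne_zero_of_rP_eq_zero hlam)
  refine mul_left_cancel₀ hcoeff ?_
  unfold rP at hlam hmu
  linear_combination (hlam - hmu) / 7

theorem rP_eq_zero_and_eq_iff {c₀ lam₀ : ℂ} (h₀ : rP c₀ lam₀ = 0) :
    rP c lam = 0 ∧ c = c₀ ↔ c = c₀ ∧ lam = lam₀ := by
  constructor
  · rintro ⟨h, rfl⟩
    exact ⟨rfl, eq_of_rP_eq_zero h h₀⟩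
  · rintro ⟨rfl, rfl⟩
    exact ⟨h₀, rfl⟩

theorem qD_eq_zero_iff_of_rP_eq_zero {n : ℂ} (h : rP c lam = 0) :
    qD n c lam = 0 ↔ eliminant n c = 0 := by
  have hmul : (16 - c + c ^ 2) * qD n c lam = 2 * eliminant n c := by
    rw [mul_qD_eq, h, mul_zero, zero_add]
  rw [← mul_eq_zero_iff_left (quadratic_ne_zero_of_rP_eq_zero h), hmul,
    mul_eq_zero_iff_left two_ne_zero]

end ParafermionCurve

theorem rP_div_div_eq_zero_iff {u v a b : ℂ} (hv : v ≠ 0) (hb : b ≠ 0) :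
    rP (u / v) (a / b) = 0 ↔
      7 * a * (u - v) * (22 * v + 5 * u) * (16 * v ^ 2 - u * v + u ^ 2)
        + b * v * (64 * v ^ 3 + 6 * u * v ^ 2 - 45 * u ^ 2 * v - 5 * u ^ 3) = 0 := by
  rw [← mul_eq_zero_iff_right (mul_ne_zero hb (pow_ne_zero 4 hv))]
  refine Eq.congr_left ?_
  unfold rP
  field_simp
  ring

theorem rP_neg_twentyFour : rP (-24) (-1 / 245) = 0 := by
  norm_num [rP]

section IntersectionPoints

variable {n : ℂ}

theorem rP_four_mul_sub_one_div (hc : 2 * n + 1 ≠ 0)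
    (hlam : 14 * (n - 1) * (17 + 64 * n) * (1 + 3 * n + 4 * n ^ 2) ≠ 0) :
    rP ((4 * n - 1) / (2 * n + 1))
      ((1 + 2 * n) * (-1 - 33 * n - 60 * n ^ 2 + 64 * n ^ 3)
        / (14 * (n - 1) * (17 + 64 * n) * (1 + 3 * n + 4 * n ^ 2))) = 0 := by
  rw [rP_div_div_eq_zero_iff hc hlam]
  ring

theorem rP_two_sub_three_mul
    (hlam : 7 * (3 * n - 1) * (15 * n - 32) * (2 - n + n ^ 2) ≠ 0) :
    rP (2 - 3 * n)
      (-(-16 + 78 * n - 75 * n ^ 2 + 15 * n ^ 3)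
        / (7 * (3 * n - 1) * (15 * n - 32) * (2 - n + n ^ 2))) = 0 := by
  rw [← div_one (2 - 3 * n), rP_div_div_eq_zero_iff one_ne_zero hlam]
  ring

theorem rP_neg_two_mul_div (hc : 2 * n - 3 ≠ 0)
    (hlam : 7 * (4 * n - 3) * (17 * n - 33) * (8 - 11 * n + 4 * n ^ 2) ≠ 0) :
    rP (-(2 * n) / (2 * n - 3))
      ((2 * n - 3) * (-48 + 93 * n - 45 * n ^ 2 + 4 * n ^ 3)
        / (7 * (4 * n - 3) * (17 * n - 33) * (8 - 11 * n + 4 * n ^ 2))) = 0 := by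
  rw [rP_div_div_eq_zero_iff hc hlam]
  ring

end IntersectionPoints

theorem parafermion_typeD_intersection_general {n : ℂ}
    (hc₂ : 2 * n + 1 ≠ 0)
    (hlam₂ : 14 * (n - 1) * (17 + 64 * n) * (1 + 3 * n + 4 * n ^ 2) ≠ 0)
    (hlam₃ : 7 * (3 * n - 1) * (15 * n - 32) * (2 - n + n ^ 2) ≠ 0)
    (hc₄ : 2 * n - 3 ≠ 0)
    (hlam₄ : 7 * (4 * n - 3) * (17 * n - 33) * (8 - 11 * n + 4 * n ^ 2) ≠ 0) :
    {p : ℂ × ℂ | rP p.1 p.2 = 0 ∧ qD n p.1 p.2 = 0}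
      = ({((-24 : ℂ), (-1/245 : ℂ)),
          ((4 * n - 1) / (2 * n + 1),
            (1 + 2 * n) * (-1 - 33 * n - 60 * n ^ 2 + 64 * n ^ 3)
              / (14 * (n - 1) * (17 + 64 * n) * (1 + 3 * n + 4 * n ^ 2))),
          (2 - 3 * n,
            -(-16 + 78 * n - 75 * n ^ 2 + 15 * n ^ 3)
              / (7 * (3 * n - 1) * (15 * n - 32) * (2 - n + n ^ 2))),
          (-(2 * n) / (2 * n - 3),
            (2 * n - 3) * (-48 + 93 * n - 45 * n ^ 2 + 4 * n ^ 3)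
              / (7 * (4 * n - 3) * (17 * n - 33) * (8 - 11 * n + 4 * n ^ 2)))} :
          Set (ℂ × ℂ)) := by
  ext ⟨c, lam⟩
  have hcharge : rP c lam = 0 ∧ qD n c lam = 0 ↔ rP c lam = 0 ∧
      (c = -24 ∨ c = (4 * n - 1) / (2 * n + 1) ∨ c = 2 - 3 * n ∨ c = -(2 * n) / (2 * n - 3)) :=
    and_congr_right fun h =>
      (qD_eq_zero_iff_of_rP_eq_zero h).trans (eliminant_eq_zero_iff hc₂ hc₄)
  simp only [Set.mem_ofPred_eq, Set.mem_insert_iff, Set.mem_singleton_iff, Prod.mk.injEq, hcharge,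
    and_or_left, rP_eq_zero_and_eq_iff rP_neg_twentyFour,
    rP_eq_zero_and_eq_iff (rP_four_mul_sub_one_div hc₂ hlam₂),
    rP_eq_zero_and_eq_iff (rP_two_sub_three_mul hlam₃),
    rP_eq_zero_and_eq_iff (rP_neg_two_mul_div hc₄ hlam₄)]

section IntegerParameter

variable {n : ℤ}

theorem intCast_denom_four_mul_sub_one_div_ne_zero (hn : n ≠ 1) :
    14 * ((n : ℂ) - 1) * (17 + 64 * n) * (1 + 3 * n + 4 * n ^ 2) ≠ 0 := by
  have hquad : 1 + 3 * n + 4 * n ^ 2 ≠ 0 := by nlinarith [sq_nonneg (8 * n + 3)]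
  have hlin : 14 * (n - 1) * (17 + 64 * n) ≠ 0 := mul_ne_zero (by omega) (by omega)
  exact_mod_cast mul_ne_zero hlin hquad

theorem intCast_denom_two_sub_three_mul_ne_zero :
    7 * (3 * (n : ℂ) - 1) * (15 * n - 32) * (2 - n + n ^ 2) ≠ 0 := by
  have hquad : 2 - n + n ^ 2 ≠ 0 := by nlinarith [sq_nonneg (2 * n - 1)]
  have hlin : 7 * (3 * n - 1) * (15 * n - 32) ≠ 0 := mul_ne_zero (by omega) (by omega)
  exact_mod_cast mul_ne_zero hlin hquad

theorem intCast_denom_neg_two_mul_div_ne_zero :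
    7 * (4 * (n : ℂ) - 3) * (17 * n - 33) * (8 - 11 * n + 4 * n ^ 2) ≠ 0 := by
  have hquad : 8 - 11 * n + 4 * n ^ 2 ≠ 0 := by nlinarith [sq_nonneg (8 * n - 11)]
  have hlin : 7 * (4 * n - 3) * (17 * n - 33) ≠ 0 := mul_ne_zero (by omega) (by omega)
  exact_mod_cast mul_ne_zero hlin hquad

end IntegerParameter

/-- For `n ≥ 3`, the intersection of the parafermion-orbifold truncation curve
`{r = 0}` and the type-D truncation curve `{q_n = 0}` consists of exactly the
four listed points. -/
theorem parafermion_typeD_intersection (n : ℤ) (hn : 3 ≤ n)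
    (nn : ℂ) (hnn : nn = (n : ℂ)) :
    {p : ℂ × ℂ | rP p.1 p.2 = 0 ∧ qD nn p.1 p.2 = 0}
      = ({((-24 : ℂ), (-1/245 : ℂ)),
          ((4 * nn - 1) / (2 * nn + 1),
            (1 + 2 * nn) * (-1 - 33 * nn - 60 * nn ^ 2 + 64 * nn ^ 3)
              / (14 * (nn - 1) * (17 + 64 * nn) * (1 + 3 * nn + 4 * nn ^ 2))),
          (2 - 3 * nn,
            -(-16 + 78 * nn - 75 * nn ^ 2 + 15 * nn ^ 3)
              / (7 * (3 * nn - 1) * (15 * nn - 32) * (2 - nn + nn ^ 2))),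
          (-(2 * nn) / (2 * nn - 3),
            (2 * nn - 3) * (-48 + 93 * nn - 45 * nn ^ 2 + 4 * nn ^ 3)
              / (7 * (4 * nn - 3) * (17 * nn - 33) * (8 - 11 * nn + 4 * nn ^ 2)))} :
          Set (ℂ × ℂ)) := by
  subst hnn
  exact parafermion_typeD_intersection_general (by norm_cast; omega)
    (intCast_denom_four_mul_sub_one_div_ne_zero (by omega))
    intCast_denom_two_sub_three_mul_ne_zero (by norm_cast; omega)
    intCast_denom_neg_two_mul_div_ne_zero
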